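/- Let v > 0 and q ∈ ℝ with q ≤ v, let W be a d×d real symmetric positive definite matrix and R a d×d real symmetric matrix with W − R positive semidefinite, and let t ≥ 0. Set ξ = v⁻¹(R − q·v⁻¹·W), A(t) = v⁻¹W + tI, and ρ(t) = A(t)^{−1/2} ξ A(t)^{−1/2}. Then 3(v − q)·I − 2v·ρ(t) ⪰ (v − q)·I ⪰ 0 in the Loewner order; in particular 3(v − q)·I − 2v·ρ(t) is positive semidefinite. -/

import Mathlib

/-! The identity `(v - q) A(t) - v ξ = (W - R) + (v - q) t I` shows that `v ξ ⪯ (v - q) A(t)`.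
Conjugating by `A(t)^(-1/2)` turns this into `v ρ(t) ⪯ (v - q) I`, and the claim is twice this
inequality. -/

open Matrix
open scoped Classical

/-- `A^(-1/2)`: the inverse of the unique positive semidefinite square root of `A`
(junk value `0` if `A` is not positive semidefinite). -/
noncomputable def invSqrt {d : ℕ} (A : Matrix (Fin d) (Fin d) ℝ) : Matrix (Fin d) (Fin d) ℝ :=
  if h : A.PosSemidef then (open scoped MatrixOrder in CFC.sqrt A)⁻¹ else 0

section OrderedModule

variable {K E : Type*} [Field K] [AddCommGroup E] [Module K E]

/-- The element `ξ = v⁻¹(R - q v⁻¹ W)`, in any vector space. -/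
def xi (v q : K) (W R : E) : E :=
  v⁻¹ • (R - (q * v⁻¹) • W)

/-- The family `A(t) = v⁻¹ W + t I`, with `I` the distinguished element `1` of the space. -/
def shifted [One E] (v t : K) (W : E) : E :=
  v⁻¹ • W + t • 1

lemma sub_smul_shifted_sub_smul_xi [One E] {v : K} (hv : v ≠ 0) (q t : K) (W R : E) :
    (v - q) • shifted v t W - v • xi v q W R = (W - R) + ((v - q) * t) • 1 := by
  simp only [shifted, xi, smul_inv_smul₀ hv, smul_add, smul_smul, sub_mul, mul_inv_cancel₀ hv]
  module

lemma smul_xi_le_sub_smul_shifted [LinearOrder K] [IsStrictOrderedRing K] [PartialOrder E]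
    [IsOrderedAddMonoid E] [PosSMulMono K E] [One E] [ZeroLEOneClass E]
    {v q t : K} {W R : E} (hv : v ≠ 0) (hq : q ≤ v) (ht : 0 ≤ t) (hRW : R ≤ W) :
    v • xi v q W R ≤ (v - q) • shifted v t W := by
  rw [← sub_nonneg, sub_smul_shifted_sub_smul_xi hv]
  exact add_nonneg (sub_nonneg.2 hRW)
    (smul_nonneg (mul_nonneg (sub_nonneg.2 hq) ht) zero_le_one)

end OrderedModule

lemma conjugate_le_smul_one {K A : Type*} [Semiring A] [StarRing A] [PartialOrder A]
    [StarOrderedRing A] [SMul K A] [IsScalarTower K A A] [SMulCommClass K A A]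
    {s a x : A} {c : K} (hs : IsSelfAdjoint s) (hsas : s * a * s = 1) (hx : x ≤ c • a) :
    s * x * s ≤ c • 1 := by
  simpa only [mul_smul_comm, smul_mul_assoc, hsas] using hs.conjugate_le_conjugate hx

section Matrix

open scoped ComplexOrder MatrixOrder

variable {𝕜 n : Type*} [RCLike 𝕜] [DecidableEq n] {v q t : ℝ} {W R : Matrix n n 𝕜}

lemma posDef_shifted (hv : 0 < v) (ht : 0 ≤ t) (hW : W.PosDef) : (shifted v t W).PosDef :=
  (hW.smul (inv_pos.2 hv)).add_posSemidef (PosSemidef.one.smul ht)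

variable [Fintype n]

lemma inv_sqrt_mul_self_mul_inv_sqrt {A : Matrix n n 𝕜} (hA : A.PosDef) :
    (CFC.sqrt A)⁻¹ * A * (CFC.sqrt A)⁻¹ = 1 := by
  have hdet : IsUnit (CFC.sqrt A).det :=
    (isUnit_iff_isUnit_det _).1 ((CFC.isUnit_sqrt_iff A hA.posSemidef.nonneg).2 hA.isUnit)
  calc (CFC.sqrt A)⁻¹ * A * (CFC.sqrt A)⁻¹
      = (CFC.sqrt A)⁻¹ * (CFC.sqrt A * CFC.sqrt A) * (CFC.sqrt A)⁻¹ := by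
        rw [CFC.sqrt_mul_sqrt_self A hA.posSemidef.nonneg]
    _ = 1 := by rw [nonsing_inv_mul_cancel_left _ _ hdet, mul_nonsing_inv _ hdet]

lemma isSelfAdjoint_inv_sqrt (A : Matrix n n 𝕜) : IsSelfAdjoint (CFC.sqrt A)⁻¹ :=
  (CFC.sqrt_nonneg A).posSemidef.inv.isHermitian

/-- The matrix `ρ(t) = A(t)^(-1/2) ξ A(t)^(-1/2)`, where `A(t)` is `shifted v t W`. It is meaningful
for positive definite `A(t)`: the matrix inverse of a singular square root is `0`. -/
noncomputable def rho (v q t : ℝ) (W R : Matrix n n 𝕜) : Matrix n n 𝕜 :=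
  (CFC.sqrt (shifted v t W))⁻¹ * xi v q W R * (CFC.sqrt (shifted v t W))⁻¹

lemma smul_rho_le_sub_smul_one (hv : v ≠ 0) (hq : q ≤ v) (ht : 0 ≤ t)
    (hA : (shifted v t W).PosDef) (hRW : R ≤ W) : v • rho v q t W R ≤ (v - q) • 1 := by
  have hξ : v • xi v q W R ≤ (v - q) • shifted v t W := smul_xi_le_sub_smul_shifted hv hq ht hRW
  simpa only [rho, mul_smul_comm, smul_mul_assoc] using
    conjugate_le_smul_one (isSelfAdjoint_inv_sqrt _) (inv_sqrt_mul_self_mul_inv_sqrt hA) hξ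

theorem three_v_sub_q_smul_one_sub_two_v_rho_posSemidef_general (hv : v ≠ 0) (hq : q ≤ v)
    (ht : 0 ≤ t) (hA : (shifted v t W).PosDef) (hWR : (W - R).PosSemidef) :
    ((3 * (v - q)) • (1 : Matrix n n 𝕜) - (2 * v) • rho v q t W R -
      (v - q) • (1 : Matrix n n 𝕜)).PosSemidef ∧
    ((v - q) • (1 : Matrix n n 𝕜)).PosSemidef := by
  refine ⟨?_, PosSemidef.one.smul (sub_nonneg.2 hq)⟩
  have hρ : ((v - q) • (1 : Matrix n n 𝕜) - v • rho v q t W R).PosSemidef :=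
    smul_rho_le_sub_smul_one hv hq ht hA hWR
  convert hρ.smul (zero_le_two (α := ℝ)) using 1
  module

lemma rho_eq_invSqrt_mul_xi_mul_invSqrt {d : ℕ} {W : Matrix (Fin d) (Fin d) ℝ}
    (hA : (shifted v t W).PosSemidef) (R : Matrix (Fin d) (Fin d) ℝ) :
    rho v q t W R = invSqrt (shifted v t W) * xi v q W R * invSqrt (shifted v t W) := by
  rw [rho, invSqrt, dif_pos hA]

end Matrix

/-- With `ξ = v⁻¹(R - q v⁻¹ W)`, `A(t) = v⁻¹ W + t I`, `ρ(t) = A(t)^(-1/2) ξ A(t)^(-1/2)`,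
we have `3(v - q) I - 2v ρ(t) ⪰ (v - q) I ⪰ 0` in the Loewner order. -/
theorem three_v_sub_q_smul_one_sub_two_v_rho_posSemidef {d : ℕ} (v q t : ℝ)
    (W R : Matrix (Fin d) (Fin d) ℝ)
    (hv : 0 < v) (hq : q ≤ v) (hW : W.PosDef) (hR : R.IsSymm)
    (hWR : (W - R).PosSemidef) (ht : 0 ≤ t) :
    ((3 * (v - q)) • (1 : Matrix (Fin d) (Fin d) ℝ) -
        (2 * v) • (invSqrt (v⁻¹ • W + t • 1) * (v⁻¹ • (R - (q * v⁻¹) • W)) *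
          invSqrt (v⁻¹ • W + t • 1)) -
      (v - q) • (1 : Matrix (Fin d) (Fin d) ℝ)).PosSemidef ∧
    ((v - q) • (1 : Matrix (Fin d) (Fin d) ℝ)).PosSemidef := by
  have hA := posDef_shifted hv ht hW
  simpa only [rho_eq_invSqrt_mul_xi_mul_invSqrt hA.posSemidef, shifted, xi] using
    three_v_sub_q_smul_one_sub_two_v_rho_posSemidef_general hv.ne' hq ht hA hWR
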